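/- For every real α, ∫_{-∞}^{∞} ₕe(-α x) e^{-x²} dx = √π · (1 + ∑_{r=1}^∞ (h_{2r}/r!) (α/2)^{2r}). -/

import Mathlib

open Real MeasureTheory

/-- The `n`-th harmonic number `h_n = ∑_{r=1}^n 1/r`. -/
noncomputable def harm (n : ℕ) : ℝ := ∑ r ∈ Finset.range n, 1 / (r + 1 : ℝ)

/-- The harmonic based exponential function `ₕe(x) = 1 + ∑_{n=1}^∞ h_n x^n / n!`. -/
noncomputable def he (x : ℝ) : ℝ :=
  1 + ∑' n : ℕ, harm (n + 1) * x ^ (n + 1) / (Nat.factorial (n + 1) : ℝ)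

/-!
The integral is `√π` times the expectation of `ₕe (-α X)` for a centred Gaussian `X` of variance
`1/2`. An exponential generating function with coefficients `a n` of at most geometric growth is
dominated by `exp (R |X|)`, which is integrable, so its expectation is `∑ 𝔼[X ^ n] / n! • a n`. The
odd moments of `X` vanish, and for variance `v` the even ones satisfy
`𝔼[X ^ (2 k)] / (2 k)! = (v / 2) ^ k / k!`.
-/

section

open ProbabilityTheory
open scoped Nat NNReal

theorem hasSum_pow_div_factorial (x : ℝ) : HasSum (fun n : ℕ => x ^ n / n !) (exp x) := by
  rw [exp_eq_exp_ℝ]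
  exact NormedSpace.expSeries_div_hasSum_exp x

section ExponentialGeneratingFunction

variable {E : Type*} [NormedAddCommGroup E] [NormedSpace ℝ E] {a : ℕ → E} {C R : ℝ}

theorem norm_pow_div_factorial_smul_le (ha : ∀ n, ‖a n‖ ≤ C * R ^ n) (n : ℕ) (x : ℝ) :
    ‖(x ^ n / n !) • a n‖ ≤ C * ((R * |x|) ^ n / n !) := by
  calc ‖(x ^ n / n !) • a n‖ = |x| ^ n / n ! * ‖a n‖ := by simp [norm_smul]
    _ ≤ |x| ^ n / n ! * (C * R ^ n) := by gcongr; exact ha n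
    _ = C * ((R * |x|) ^ n / n !) := by ring

variable [CompleteSpace E]

theorem summable_pow_div_factorial_smul (ha : ∀ n, ‖a n‖ ≤ C * R ^ n) (x : ℝ) :
    Summable fun n : ℕ => (x ^ n / n !) • a n :=
  .of_norm_bounded ((hasSum_pow_div_factorial (R * |x|)).summable.mul_left C)
    fun n => norm_pow_div_factorial_smul_le ha n x

theorem hasSum_integral_pow_div_factorial_smul {μ : Measure ℝ} {f : ℝ → E}
    (ha : ∀ n, ‖a n‖ ≤ C * R ^ n) (hμ : Integrable (fun x => exp (R * |x|)) μ)
    (hf : ∀ x : ℝ, HasSum (fun n : ℕ => (x ^ n / n !) • a n) (f x)) :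
    HasSum (fun n : ℕ => ((∫ x, x ^ n ∂μ) / n !) • a n) (∫ x, f x ∂μ) := by
  have hbound (x : ℝ) :
      HasSum (fun n : ℕ => C * ((R * |x|) ^ n / n !)) (C * exp (R * |x|)) :=
    (hasSum_pow_div_factorial _).mul_left C
  simp only [← integral_div, ← integral_smul_const]
  refine hasSum_integral_of_dominated_convergence (fun n x => C * ((R * |x|) ^ n / n !))
    (fun n => by fun_prop)
    (fun n => .of_forall (norm_pow_div_factorial_smul_le ha n))
    (.of_forall fun x => (hbound x).summable) ?_ (.of_forall hf)
  simpa only [(hbound _).tsum_eq] using hμ.const_mul C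

end ExponentialGeneratingFunction

theorem integral_eq_zero_of_odd {G E : Type*} [AddGroup G] [MeasurableSpace G]
    [MeasurableNeg G] [NormedAddCommGroup E] [NormedSpace ℝ E] {μ : Measure G} [μ.IsNegInvariant]
    {f : G → E} (hf : f.Odd) : ∫ x, f x ∂μ = 0 := by
  have : IsAddTorsionFree E := .of_isTorsionFree ℝ E
  rw [← self_eq_neg]
  calc ∫ x, f x ∂μ = ∫ x, f (-x) ∂μ := (integral_neg_eq_self f μ).symm
    _ = ∫ x, -f x ∂μ := integral_congr_ae (.of_forall hf)
    _ = -∫ x, f x ∂μ := integral_neg f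

theorem two_pow_mul_factorial_mul_doubleFactorial (k : ℕ) :
    2 ^ k * k ! * (2 * k - 1)‼ = (2 * k)! := by
  rw [← Nat.doubleFactorial_two_mul]
  cases k with
  -- The truncated `2 * 0 - 1` is `0`, and `0‼ = 1` agrees with the convention `(-1)‼ = 1`.
  | zero => rfl
  | succ k => exact (Nat.factorial_eq_mul_doubleFactorial (2 * k + 1)).symm

theorem integral_pow_two_mul_mul_exp_neg_mul_sq {b : ℝ} (hb : 0 < b) (k : ℕ) :
    ∫ x : ℝ, x ^ (2 * k) * exp (-b * x ^ 2) = √(π / b) * ((2 * k)! / (k ! * (4 * b) ^ k)) := by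
  have hfold : ∫ x : ℝ, x ^ (2 * k) * exp (-b * x ^ 2) =
      2 * ∫ x in Set.Ioi (0 : ℝ), x ^ (2 * k) * exp (-b * x ^ 2) := by
    have h := integral_comp_abs (f := fun x : ℝ => x ^ (2 * k) * exp (-b * x ^ 2))
    simpa only [sq_abs, (even_two_mul k).pow_abs] using h
  have hGamma : ∫ x in Set.Ioi (0 : ℝ), x ^ (2 * k) * exp (-b * x ^ 2) =
      b ^ (-(k + 1 / 2) : ℝ) * (1 / 2) * Gamma (k + 1 / 2) := by
    have h := integral_rpow_mul_exp_neg_mul_rpow (p := 2) (q := (2 * k : ℕ)) two_pos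
      (by linarith [Nat.cast_nonneg (α := ℝ) (2 * k)]) hb
    have hexponent : ((2 * k : ℕ) + 1 : ℝ) / 2 = k + 1 / 2 := by push_cast; ring
    simpa only [rpow_natCast, rpow_ofNat, neg_div, hexponent] using h
  have hpow : b ^ (-(k + 1 / 2) : ℝ) = (b ^ k * √b)⁻¹ := by
    rw [rpow_neg hb.le, rpow_add hb, rpow_natCast, sqrt_eq_rpow]
  have hfour : (4 : ℝ) ^ k = 2 ^ k * 2 ^ k := by rw [← mul_pow]; norm_num
  rw [hfold, hGamma, hpow, Gamma_nat_add_half, sqrt_div pi_nonneg, mul_pow, hfour,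
    ← two_pow_mul_factorial_mul_doubleFactorial]
  push_cast
  field_simp

theorem integral_gaussianReal_zero_eq_integral_exp_smul {E : Type*} [NormedAddCommGroup E]
    [NormedSpace ℝ E] {v : ℝ≥0} (hv : v ≠ 0) (f : ℝ → E) :
    ∫ x, f x ∂gaussianReal 0 v = (√(2 * π * v))⁻¹ • ∫ x, exp (-(2 * v : ℝ)⁻¹ * x ^ 2) • f x := by
  rw [integral_gaussianReal_eq_integral_smul hv, ← integral_smul]
  refine integral_congr_ae (.of_forall fun x => ?_)
  simp only [gaussianPDFReal, sub_zero, smul_smul]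
  congr 3
  ring

theorem integral_mul_exp_neg_sq (f : ℝ → ℝ) :
    ∫ x, f x * exp (-x ^ 2) = √π * ∫ x, f x ∂gaussianReal 0 (1 / 2) := by
  have hvariance : 2 * ((1 / 2 : ℝ≥0) : ℝ) = 1 := by norm_num
  rw [integral_gaussianReal_zero_eq_integral_exp_smul (by norm_num), mul_right_comm, hvariance,
    one_mul, smul_eq_mul, mul_inv_cancel_left₀ (by positivity)]
  simp only [inv_one, neg_mul, one_mul, smul_eq_mul, mul_comm (exp _)]

section GaussianMoments

variable (v : ℝ≥0)

instance isNegInvariant_gaussianReal_zero : (gaussianReal 0 v).IsNegInvariant :=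
  ⟨gaussianReal_map_neg.trans (by rw [neg_zero])⟩

theorem integrable_exp_mul_abs_gaussianReal (m R : ℝ) :
    Integrable (fun x => exp (R * |x|)) (gaussianReal m v) :=
  integrable_exp_mul_abs (integrable_exp_mul_gaussianReal R) (integrable_exp_mul_gaussianReal (-R))

theorem integral_pow_two_mul_gaussianReal_zero (k : ℕ) :
    ∫ x, x ^ (2 * k) ∂gaussianReal 0 v = (2 * k)! / k ! * (v / 2 : ℝ) ^ k := by
  rcases eq_or_ne v 0 with rfl | hv
  · cases k <;> simp
  have hsqrt : π / (2 * v : ℝ)⁻¹ = 2 * π * v := by field_simp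
  have hscale : 4 * (2 * v : ℝ)⁻¹ = (v / 2 : ℝ)⁻¹ := by field_simp; norm_num
  simp only [integral_gaussianReal_zero_eq_integral_exp_smul hv, smul_eq_mul,
    mul_comm (exp _)]
  rw [integral_pow_two_mul_mul_exp_neg_mul_sq (by positivity), hsqrt, hscale,
    inv_mul_cancel_left₀ (by positivity), inv_pow]
  field_simp

theorem hasSum_integral_gaussianReal_zero {E : Type*} [NormedAddCommGroup E] [NormedSpace ℝ E]
    [CompleteSpace E] {a : ℕ → E} {f : ℝ → E} {C R : ℝ} (ha : ∀ n, ‖a n‖ ≤ C * R ^ n)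
    (hf : ∀ x : ℝ, HasSum (fun n : ℕ => (x ^ n / n !) • a n) (f x)) :
    HasSum (fun k : ℕ => ((v / 2 : ℝ) ^ k / k !) • a (2 * k)) (∫ x, f x ∂gaussianReal 0 v) := by
  have hmoments := hasSum_integral_pow_div_factorial_smul ha
    (integrable_exp_mul_abs_gaussianReal v 0 R) hf
  have hodd : ∀ n ∉ Set.range (2 * · : ℕ → ℕ),
      ((∫ x, x ^ n ∂gaussianReal 0 v) / n !) • a n = 0 := fun n hn => by
    have hn : Odd n := by simpa [range_two_mul] using hn
    rw [integral_eq_zero_of_odd fun x => hn.neg_pow x, zero_div, zero_smul]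
  have heven (k : ℕ) : (∫ x, x ^ (2 * k) ∂gaussianReal 0 v) / (2 * k)! = (v / 2 : ℝ) ^ k / k ! := by
    rw [integral_pow_two_mul_gaussianReal_zero]
    field_simp
  simpa only [Function.comp_def, heven] using
    ((mul_right_injective₀ two_ne_zero).hasSum_iff hodd).mpr hmoments

end GaussianMoments

/-- The exponential generating coefficients of `ₕe`, i.e. its derivatives at `0`. They are the
harmonic numbers except at index `0`, where `ₕe` has constant term `1` although `h_0 = 0`. -/
noncomputable def heCoeff : ℕ → ℝ
  | 0 => 1
  | n + 1 => harm (n + 1)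

theorem harm_nonneg (n : ℕ) : 0 ≤ harm n :=
  Finset.sum_nonneg fun _ _ => by positivity

theorem harm_le_self (n : ℕ) : harm n ≤ n := by
  have hterm : ∀ r ∈ Finset.range n, 1 / (r + 1 : ℝ) ≤ 1 := fun r _ =>
    div_le_one_of_le₀ (by simp) (by positivity)
  simpa [harm] using Finset.sum_le_card_nsmul _ _ _ hterm

theorem abs_heCoeff_le_two_pow : ∀ n, |heCoeff n| ≤ 2 ^ n
  | 0 => by simp [heCoeff]
  | n + 1 => by
    rw [heCoeff, abs_of_nonneg (harm_nonneg _)]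
    exact (harm_le_self _).trans (mod_cast Nat.lt_two_pow_self.le)

theorem hasSum_he (x : ℝ) : HasSum (fun n : ℕ => x ^ n / n ! * heCoeff n) (he x) := by
  have hsummable : Summable fun n : ℕ => x ^ n / n ! * heCoeff n :=
    summable_pow_div_factorial_smul (C := 1) (R := 2)
      (fun n => by simpa using abs_heCoeff_le_two_pow n) x
  convert hsummable.hasSum using 1
  rw [hsummable.tsum_eq_zero_add, he]
  simp only [heCoeff, pow_zero, Nat.factorial_zero, Nat.cast_one, div_one, one_mul,
    mul_comm (harm _), div_mul_eq_mul_div]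

theorem hasSum_integral_he_gaussianReal_zero (c : ℝ) (v : ℝ≥0) :
    HasSum (fun k : ℕ => (v / 2 : ℝ) ^ k / k ! * (c ^ (2 * k) * heCoeff (2 * k)))
      (∫ x, he (c * x) ∂gaussianReal 0 v) := by
  refine hasSum_integral_gaussianReal_zero v (a := fun n => c ^ n * heCoeff n) (C := 1)
    (R := 2 * |c|) (fun n => ?_) (fun x => ?_)
  · rw [norm_mul, norm_pow, norm_eq_abs, norm_eq_abs, one_mul, mul_pow, mul_comm]
    gcongr
    exact abs_heCoeff_le_two_pow n
  · simpa only [mul_pow, mul_comm (c ^ _), mul_div_right_comm, mul_assoc, smul_eq_mul] using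
      hasSum_he (c * x)

end

/-- `∫_{-∞}^{∞} ₕe(-αx) e^{-x²} dx = √π (1 + ∑_{r=1}^∞ (h_{2r}/r!)(α/2)^{2r})`. -/
theorem he_gaussian_integral (α : ℝ) :
    (∫ x : ℝ, he (-α * x) * Real.exp (-x ^ 2)) =
      Real.sqrt π *
        (1 + ∑' r : ℕ,
          harm (2 * (r + 1)) / (Nat.factorial (r + 1) : ℝ) * (α / 2) ^ (2 * (r + 1))) := by
  have hseries := hasSum_integral_he_gaussianReal_zero (-α) (1 / 2)
  rw [integral_mul_exp_neg_sq fun x => he (-α * x), ← hseries.tsum_eq,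
    hseries.summable.tsum_eq_zero_add]
  congr 2
  · simp [heCoeff]
  · refine tsum_congr fun r => ?_
    have hcoeff : heCoeff (2 * (r + 1)) = harm (2 * (r + 1)) := rfl
    have hquarter : ((1 / 2 : NNReal) / 2 : ℝ) = (1 / 2) ^ 2 := by norm_num
    rw [hcoeff, hquarter, ← pow_mul, (even_two_mul _).neg_pow]
    ring
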